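/- Let A and B be types, R : A → B → Prop a binary relation, and b : ℕ → ℕ → B an array of elements of B such that: (i) for every function σ : ℕ → ℕ there exists x ∈ A with R x (b i (σ i)) for all i ∈ ℕ; and (ii) for every i and all j ≠ k there is no x ∈ A with both R x (b i j) and R x (b i k). Then the map i ↦ b i 0 is injective, and for every subset I ⊆ ℕ there exists x ∈ A such that for all i ∈ ℕ, R x (b i 0) holds if and only if i ∈ I. (In particular, the opposite relation of R shatters the infinite set {b i 0 : i ∈ ℕ}.) -/

import Mathlib

/-!
Given a set `I` of rows, follow one fixed path through the array on the rows in `I` and a second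
path, disjoint from the first, on the other rows. An element realizing the mixed path satisfies
the fixed path on `I`, and by row inconsistency nowhere else.
-/

section IndependentFamily

variable {ι A B : Type*} {R : A → B → Prop}

/-- A family `c` of parameters is independent for `R` if every subset of the index type is cut out
by some element: the pattern witnessing the independence property (IP). It is indexed rather than
a set of parameters, so that injectivity is a theorem (`IsIndependentFamily.injective`). -/
def IsIndependentFamily (R : A → B → Prop) (c : ι → B) : Prop :=
  ∀ I : Set ι, ∃ x : A, ∀ i : ι, R x (c i) ↔ i ∈ I

theorem IsIndependentFamily.injective {c : ι → B} (hc : IsIndependentFamily R c) :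
    Function.Injective c := by
  intro i j hij
  obtain ⟨x, hx⟩ := hc {j}
  have hxi : R x (c i) := hij ▸ (hx j).2 rfl
  exact (hx i).1 hxi

open scoped Classical in
theorem IsIndependentFamily.of_piecewise {c d : ι → B}
    (consistent : ∀ I : Set ι, ∃ x : A, ∀ i : ι, R x (I.piecewise c d i))
    (inconsistent : ∀ i : ι, ¬ ∃ x : A, R x (c i) ∧ R x (d i)) :
    IsIndependentFamily R c := by
  intro I
  obtain ⟨x, hx⟩ := consistent I
  refine ⟨x, fun i => ⟨fun hxc => ?_, fun hi => ?_⟩⟩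
  · by_contra hi
    have hxd : R x (d i) := Set.piecewise_eq_of_notMem I c d hi ▸ hx i
    exact inconsistent i ⟨x, hxc, hxd⟩
  · exact Set.piecewise_eq_of_mem I c d hi ▸ hx i

end IndependentFamily

section TP2

variable {ι A B : Type*} {κ : ι → Type*} {R : A → B → Prop} {b : ∀ i, κ i → B}

/-- The array `b` witnesses the tree property of the second kind (TP₂) for `R`: every path through
the rows is consistent, and every row is 2-inconsistent. Rows are indexed by an arbitrary type,
and each row `i` has its own type `κ i` of columns. -/
structure IsTP2Array (R : A → B → Prop) (b : ∀ i, κ i → B) : Prop where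
  path_consistent : ∀ σ : ∀ i, κ i, ∃ x : A, ∀ i : ι, R x (b i (σ i))
  row_inconsistent : ∀ i : ι, Pairwise fun j k => ¬ ∃ x : A, R x (b i j) ∧ R x (b i k)

theorem IsTP2Array.isIndependentFamily [∀ i, Nontrivial (κ i)] (hb : IsTP2Array R b)
    (τ : ∀ i, κ i) : IsIndependentFamily R fun i => b i (τ i) := by
  classical
  choose τ' hτ' using fun i => exists_ne (τ i)
  refine .of_piecewise (d := fun i => b i (τ' i)) (fun I => ?_)
    fun i => hb.row_inconsistent i (hτ' i).symm
  obtain ⟨x, hx⟩ := hb.path_consistent (I.piecewise τ τ')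
  refine ⟨x, fun i => ?_⟩
  rw [← Set.apply_piecewise I τ τ' b]
  exact hx i

theorem ip_of_tp2_general [∀ i, Nontrivial (κ i)] (hb : IsTP2Array R b) (τ : ∀ i, κ i) :
    Function.Injective (fun i => b i (τ i)) ∧ IsIndependentFamily R fun i => b i (τ i) :=
  ⟨(hb.isIndependentFamily τ).injective, hb.isIndependentFamily τ⟩

end TP2

theorem ip_of_tp2 {A B : Type*} (R : A → B → Prop) (b : ℕ → ℕ → B)
    (h1 : ∀ σ : ℕ → ℕ, ∃ x : A, ∀ i : ℕ, R x (b i (σ i)))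
    (h2 : ∀ i j k : ℕ, j ≠ k → ¬ ∃ x : A, R x (b i j) ∧ R x (b i k)) :
    Function.Injective (fun i => b i 0) ∧
      ∀ I : Set ℕ, ∃ x : A, ∀ i : ℕ, R x (b i 0) ↔ i ∈ I :=
  ip_of_tp2_general ⟨h1, fun i j k => h2 i j k⟩ fun _ => 0
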